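/- Let A be a unital C*-algebra, J ⊆ A a closed two-sided ideal, and X ⊆ A an operator system. Then the C*-algebra B(X,J) generated by S(X,J) inside M₂(A) consists precisely of the elements [[a, b],[c, d]] with a ∈ C*(X) + J, b ∈ J, c ∈ J and d ∈ J + ℂ1. In particular, B(X,J) contains the closed two-sided ideal M₂(J). -/

import Mathlib

noncomputable section

namespace ArvesonCounterexample

variable (A : Type*) [CStarAlgebra A]

/-- The C*-subalgebra of `A` generated by a subset `X`. -/
def cstarGen (X : Set A) : StarSubalgebra ℂ A :=
  (StarAlgebra.adjoin ℂ X).topologicalClosure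

/-- The set `J + ℂ·1`. -/
def unitize (J : Set A) : Set A :=
  {d | ∃ j ∈ J, ∃ c : ℂ, d = j + c • (1 : A)}

/-- The operator system `S(X,J)` inside `M₂(A)`, consisting of the matrices
`[[x, j], [k, b]]` with `x ∈ X`, `j, k ∈ J` and `b ∈ J + ℂ1`. -/
def opSys (X J : Set A) : Set (Matrix (Fin 2) (Fin 2) A) :=
  {m | m 0 0 ∈ X ∧ m 0 1 ∈ J ∧ m 1 0 ∈ J ∧ m 1 1 ∈ unitize A J}

/-- The C*-algebra `B(X,J)` generated by `S(X,J)` inside `M₂(A)`. -/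
def calg (X J : Set A) : StarSubalgebra ℂ (Matrix (Fin 2) (Fin 2) A) :=
  (StarAlgebra.adjoin ℂ (opSys A X J)).topologicalClosure

/-- The set `C*(X) + J`. -/
def cstarPlusSet (X J : Set A) : Set A :=
  {a | ∃ x ∈ cstarGen A X, ∃ j ∈ J, a = x + j}

/-- `J` is a closed two-sided ideal of `A`. -/
structure IsClosedTwoSidedIdeal (J : Set A) : Prop where
  zero_mem : (0 : A) ∈ J
  add_mem : ∀ x ∈ J, ∀ y ∈ J, x + y ∈ J
  mul_mem_left : ∀ (a : A), ∀ j ∈ J, a * j ∈ J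
  mul_mem_right : ∀ (a : A), ∀ j ∈ J, j * a ∈ J
  isClosed : IsClosed J

/-- `X` is an operator system in `A`: a unital norm-closed self-adjoint subspace. -/
structure IsOperatorSystem (X : Set A) : Prop where
  one_mem : (1 : A) ∈ X
  add_mem : ∀ x ∈ X, ∀ y ∈ X, x + y ∈ X
  smul_mem : ∀ (c : ℂ), ∀ x ∈ X, c • x ∈ X
  star_mem : ∀ x ∈ X, star x ∈ X
  isClosed : IsClosed X


variable {A}

namespace IsClosedTwoSidedIdeal

variable {J : Set A}

lemma smul_mem (hJ : IsClosedTwoSidedIdeal A J) (c : ℂ) {j : A} (hj : j ∈ J) : c • j ∈ J := by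
  have := hJ.mul_mem_left (c • (1 : A)) j hj
  simpa using this

lemma neg_mem (hJ : IsClosedTwoSidedIdeal A J) {j : A} (hj : j ∈ J) : -j ∈ J := by
  have := hJ.mul_mem_left (-1) j hj
  simpa using this

lemma sub_mem (hJ : IsClosedTwoSidedIdeal A J) {x y : A} (hx : x ∈ J) (hy : y ∈ J) :
    x - y ∈ J := by
  rw [sub_eq_add_neg]
  exact hJ.add_mem _ hx _ (hJ.neg_mem hy)

lemma mem_of_approx (hJ : IsClosedTwoSidedIdeal A J) {x : A}
    (h : ∀ r : ℝ, 0 < r → ∃ y ∈ J, ‖x - y‖ ≤ r) : x ∈ J := by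
  rw [← hJ.isClosed.closure_eq, Metric.mem_closure_iff]
  intro ε hε
  obtain ⟨y, hy, hxy⟩ := h (ε / 2) (half_pos hε)
  exact ⟨y, hy, by rw [dist_eq_norm]; linarith⟩

lemma aeval_sub_mem (hJ : IsClosedTwoSidedIdeal A J) {a b : A} (hab : a - b ∈ J)
    (p : Polynomial ℝ) : Polynomial.aeval a p - Polynomial.aeval b p ∈ J := by
  induction p using Polynomial.induction_on' with
  | add p q hp hq =>
    rw [map_add, map_add, add_sub_add_comm]
    exact hJ.add_mem _ hp _ hq
  | monomial n c =>
    rw [Polynomial.aeval_monomial, Polynomial.aeval_monomial, ← mul_sub]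
    apply hJ.mul_mem_left
    induction n with
    | zero => simpa using hJ.zero_mem
    | succ n ih =>
      have : a ^ (n + 1) - b ^ (n + 1) = (a ^ n - b ^ n) * a + b ^ n * (a - b) := by
        rw [pow_succ, pow_succ]; noncomm_ring
      rw [this]
      exact hJ.add_mem _ (hJ.mul_mem_right _ _ ih) _ (hJ.mul_mem_left _ _ hab)

lemma cfc_sub_mem (hJ : IsClosedTwoSidedIdeal A J) {a b : A} (ha : IsSelfAdjoint a)
    (hb : IsSelfAdjoint b) (hab : a - b ∈ J) (f : ℝ → ℝ) (hf : Continuous f) :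
    cfc f a - cfc f b ∈ J := by
  rcases subsingleton_or_nontrivial A with hA | hA
  · convert hJ.zero_mem
  apply hJ.mem_of_approx
  intro r hr
  set R := max ‖a‖ ‖b‖
  obtain ⟨p, hp⟩ := exists_polynomial_near_of_continuousOn (-R) R f hf.continuousOn (r / 2)
    (half_pos hr)
  have key : ∀ c : A, IsSelfAdjoint c → ‖c‖ ≤ R → ‖cfc f c - Polynomial.aeval c p‖ ≤ r / 2 := by
    intro c hc hcR
    rw [← cfc_polynomial p c hc, ← cfc_sub f p.eval c hf.continuousOn p.continuous.continuousOn]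
    refine norm_cfc_le (half_pos hr).le fun x hx => ?_
    have h1 : ‖x‖ ≤ ‖c‖ := spectrum.norm_le_norm_of_mem hx
    rw [norm_sub_rev]
    exact (hp x (abs_le.mp (h1.trans hcR))).le
  refine ⟨_, hJ.aeval_sub_mem hab p, ?_⟩
  have h1 := key a ha (le_max_left _ _)
  have h2 := key b hb (le_max_right _ _)
  rw [sub_sub_sub_comm]
  exact (norm_sub_le _ _).trans (by linarith)

end IsClosedTwoSidedIdeal

/-- The cut-off function. -/
def cut (r t : ℝ) : ℝ := r / max r (Real.sqrt t)

lemma cut_continuous {r : ℝ} (hr : 0 < r) : Continuous (cut r) := by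
  unfold cut
  refine continuous_const.div (by fun_prop) fun t => ?_
  exact (lt_of_lt_of_le hr (le_max_left _ _)).ne'

lemma cut_eq_one {r t : ℝ} (hr : 0 < r) (ht : t ≤ r ^ 2) : cut r t = 1 := by
  have : Real.sqrt t ≤ r := by
    rw [Real.sqrt_le_left hr.le]; exact ht
  rw [cut, max_eq_left this, div_self hr.ne']

lemma cut_bound {r t : ℝ} (hr : 0 < r) (ht : 0 ≤ t) : |cut r t * t * cut r t| ≤ r ^ 2 := by
  have hm : 0 < max r (Real.sqrt t) := lt_of_lt_of_le hr (le_max_left _ _)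
  have h0 : 0 ≤ cut r t := by unfold cut; positivity
  have h1 : cut r t * Real.sqrt t ≤ r := by
    rw [cut, div_mul_eq_mul_div, div_le_iff₀ hm]
    exact mul_le_mul_of_nonneg_left (le_max_right _ _) hr.le
  rw [abs_of_nonneg (by positivity)]
  calc cut r t * t * cut r t = (cut r t * Real.sqrt t) ^ 2 := by
        rw [mul_pow, Real.sq_sqrt ht]; ring
    _ ≤ r ^ 2 := pow_le_pow_left₀ (by positivity) h1 2

lemma norm_mul_cut_le (c : A) {r : ℝ} (hr : 0 < r) :
    ‖c * cfc (cut r) (star c * c)‖ ≤ r := by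
  have hc : IsSelfAdjoint (star c * c) := IsSelfAdjoint.star_mul_self c
  have hk : IsSelfAdjoint (cfc (cut r) (star c * c)) := cfc_predicate _ _
  have hcont := (cut_continuous hr).continuousOn (s := spectrum ℝ (star c * c))
  have e : star (c * cfc (cut r) (star c * c)) * (c * cfc (cut r) (star c * c))
      = cfc (fun t => cut r t * t * cut r t) (star c * c) := by
    rw [cfc_mul (fun t => cut r t * t) (cut r) _ (hcont.mul continuousOn_id) hcont,
      cfc_mul (cut r) (fun t => t) _ hcont continuousOn_id, cfc_id' ℝ (star c * c), star_mul,
      hk.star_eq]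
    simp only [mul_assoc]
  have h2 : ‖c * cfc (cut r) (star c * c)‖ * ‖c * cfc (cut r) (star c * c)‖ ≤ r ^ 2 := by
    rw [← CStarRing.norm_star_mul_self, e]
    exact norm_cfc_le (by positivity) fun x hx => cut_bound hr (spectrum_star_mul_self_nonneg x hx)
  exact abs_le_of_sq_le_sq' (by rw [sq]; exact h2) hr.le |>.2

namespace IsClosedTwoSidedIdeal

variable {J : Set A}

lemma one_sub_cut_mem (hJ : IsClosedTwoSidedIdeal A J) {c : A} (hc : star c * c ∈ J) {r : ℝ}
    (hr : 0 < r) : 1 - cfc (cut r) (star c * c) ∈ J := by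
  have := hJ.cfc_sub_mem (IsSelfAdjoint.zero A) (IsSelfAdjoint.star_mul_self c)
    (by simpa using hJ.neg_mem hc) (cut r) (cut_continuous hr)
  rwa [cfc_apply_zero, cut_eq_one hr (by positivity), map_one] at this

lemma star_mem (hJ : IsClosedTwoSidedIdeal A J) {j : A} (hj : j ∈ J) : star j ∈ J := by
  apply hJ.mem_of_approx
  intro r hr
  have h : star (star j) * star j ∈ J := hJ.mul_mem_right _ _ (by simpa using hj)
  refine ⟨_, hJ.mul_mem_left (star j) _ (hJ.one_sub_cut_mem h hr), ?_⟩
  have := norm_mul_cut_le (star j) hr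
  rwa [mul_sub, mul_one, sub_sub_cancel]

lemma exists_approx (hJ : IsClosedTwoSidedIdeal A J) {j : A} (hj : j ∈ J) {r : ℝ} (hr : 0 < r) :
    ∃ e ∈ J, ‖j - j * e‖ ≤ r := by
  refine ⟨_, hJ.one_sub_cut_mem (hJ.mul_mem_left (star j) _ hj) hr, ?_⟩
  have := norm_mul_cut_le j hr
  rwa [mul_sub, mul_one, sub_sub_cancel]

lemma one_sub_cut_mem' (hJ : IsClosedTwoSidedIdeal A J) {c d : A} (hcd : c - d ∈ J) {r : ℝ}
    (hr : 0 < r) (hd : ‖d‖ ≤ r) : 1 - cfc (cut r) (star c * c) ∈ J := by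
  rcases subsingleton_or_nontrivial A with hA | hA
  · convert hJ.zero_mem
  have h1 : star d * d - star c * c ∈ J := by
    have : star d * d - star c * c = -(star (c - d) * d + star c * (c - d)) := by
      rw [star_sub]; noncomm_ring
    rw [this]
    exact hJ.neg_mem (hJ.add_mem _ (hJ.mul_mem_right _ _ (hJ.star_mem hcd)) _
      (hJ.mul_mem_left _ _ hcd))
  have := hJ.cfc_sub_mem (IsSelfAdjoint.star_mul_self d) (IsSelfAdjoint.star_mul_self c) h1
    (cut r) (cut_continuous hr)
  have e : cfc (cut r) (star d * d) = 1 := by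
    rw [← cfc_const_one ℝ (star d * d) (IsSelfAdjoint.star_mul_self d)]
    apply cfc_congr
    intro t ht
    apply cut_eq_one hr
    have h2 : ‖t‖ ≤ ‖star d * d‖ := spectrum.norm_le_norm_of_mem ht
    rw [CStarRing.norm_star_mul_self] at h2
    calc t ≤ ‖t‖ := le_abs_self t
      _ ≤ ‖d‖ * ‖d‖ := h2
      _ ≤ r ^ 2 := by rw [sq]; exact mul_self_le_mul_self (norm_nonneg _) hd
  rwa [e] at this

/-- `J` as a closed submodule. -/
def toSub (hJ : IsClosedTwoSidedIdeal A J) : Submodule ℂ A where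
  carrier := J
  zero_mem' := hJ.zero_mem
  add_mem' := fun ha hb => hJ.add_mem _ ha _ hb
  smul_mem' := fun c _ h => hJ.smul_mem c h

lemma isClosed_unitize (hJ : IsClosedTwoSidedIdeal A J) : IsClosed (unitize A J) := by
  have h := Submodule.isClosed_sup_finiteDimensional hJ.toSub (Submodule.span ℂ {(1 : A)})
    hJ.isClosed
  convert h using 1
  ext d
  simp only [unitize, Set.mem_ofPred_eq, SetLike.mem_coe, Submodule.mem_sup,
    Submodule.mem_span_singleton]
  constructor
  · rintro ⟨j, hj, c, rfl⟩
    exact ⟨j, hj, _, ⟨c, rfl⟩, rfl⟩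
  · rintro ⟨j, hj, _, ⟨c, rfl⟩, rfl⟩
    exact ⟨j, hj, c, rfl⟩

lemma isClosed_add (hJ : IsClosedTwoSidedIdeal A J) (C : StarSubalgebra ℂ A)
    (hC : IsClosed (C : Set A)) : IsClosed {a : A | ∃ x ∈ C, ∃ j ∈ J, a = x + j} := by
  let CS : Submodule ℂ A := Subalgebra.toSubmodule C.toSubalgebra
  have hCS : IsClosed (CS : Set A) := hC
  have : CompleteSpace CS := hCS.completeSpace_coe
  have : CompleteSpace hJ.toSub := IsClosed.completeSpace_coe (s := J) (hs := hJ.isClosed)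
  let f : NormedAddGroupHom (CS × hJ.toSub) A :=
    AddMonoidHom.mkNormedAddGroupHom
      ((CS.subtype.coprod hJ.toSub.subtype).toAddMonoidHom) 2 (by
        rintro ⟨x, j⟩
        have h1 : ‖x‖ ≤ ‖(x, j)‖ := norm_fst_le (x, j)
        have h2 : ‖j‖ ≤ ‖(x, j)‖ := norm_snd_le (x, j)
        have h3 : ‖(x : A) + (j : A)‖ ≤ ‖(x : A)‖ + ‖(j : A)‖ := norm_add_le _ _
        have h4 : ‖(x : A)‖ = ‖x‖ := rfl
        have h5 : ‖(j : A)‖ = ‖j‖ := rfl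
        change ‖(x : A) + (j : A)‖ ≤ _
        linarith)
  have hfa : ∀ x j, f (x, j) = (x : A) + (j : A) := fun _ _ => rfl
  let K : AddSubgroup A := (CS ⊔ hJ.toSub).toAddSubgroup
  have hKmem : ∀ a, a ∈ K ↔ ∃ x ∈ C, ∃ j ∈ J, a = x + j := by
    intro a
    change a ∈ CS ⊔ hJ.toSub ↔ _
    rw [Submodule.mem_sup]
    constructor
    · rintro ⟨x, hx, j, hj, rfl⟩
      exact ⟨x, hx, j, hj, rfl⟩
    · rintro ⟨x, hx, j, hj, rfl⟩
      exact ⟨x, hx, j, hj, rfl⟩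
  have hsurj : f.SurjectiveOnWith K 2 := by
    intro a ha
    by_cases h0 : a = 0
    · exact ⟨0, by simp [h0], by simp⟩
    obtain ⟨c, hc, j, hj, hac⟩ := (hKmem a).1 ha
    have hr : 0 < ‖a‖ := norm_pos_iff.mpr h0
    have hcd : c - a ∈ J := by
      have : c - a = -j := by rw [hac]; abel
      rw [this]; exact hJ.neg_mem hj
    have hm := hJ.one_sub_cut_mem' hcd hr le_rfl
    have hn := norm_mul_cut_le c hr
    have hkC : cfc (cut ‖a‖) (star c * c) ∈ C :=
      cfc_mem (𝕜' := ℂ) (hs := hC) (cut ‖a‖) (mul_mem (StarMemClass.star_mem hc) hc)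
    set k := cfc (cut ‖a‖) (star c * c)
    have hjm : a - c * k ∈ J := by
      have : a - c * k = c * (1 - k) - (c - a) := by noncomm_ring
      rw [this]
      exact hJ.sub_mem (hJ.mul_mem_left _ _ hm) hcd
    refine ⟨(⟨c * k, C.mul_mem hc hkC⟩, ⟨a - c * k, hjm⟩), ?_, ?_⟩
    · rw [hfa]; simp
    · rw [Prod.norm_def]
      apply max_le
      · change ‖c * k‖ ≤ _
        linarith
      · change ‖a - c * k‖ ≤ _
        exact (norm_sub_le _ _).trans (by linarith)
  have hcl := controlled_closure_of_complete two_pos one_pos hsurj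
  have : closure {a : A | ∃ x ∈ C, ∃ j ∈ J, a = x + j} ⊆ {a : A | ∃ x ∈ C, ∃ j ∈ J, a = x + j} := by
    intro a ha
    have hK : (K : Set A) = {a : A | ∃ x ∈ C, ∃ j ∈ J, a = x + j} := Set.ext hKmem
    rw [← hK] at ha
    obtain ⟨⟨x, j⟩, hg, -⟩ := hcl a ha
    exact ⟨x, x.2, j, j.2, hg.symm⟩
  exact isClosed_of_closure_subset this

end IsClosedTwoSidedIdeal

/-- The target set, as a star subalgebra. -/
def target {J : Set A} (X : Set A) (hJ : IsClosedTwoSidedIdeal A J) :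
    StarSubalgebra ℂ (Matrix (Fin 2) (Fin 2) A) where
  carrier := {m | m 0 0 ∈ cstarPlusSet A X J ∧ m 0 1 ∈ J ∧ m 1 0 ∈ J ∧ m 1 1 ∈ unitize A J}
  add_mem' := by
    rintro m n ⟨⟨x, hx, j, hj, h1⟩, h2, h3, ⟨k, hk, c, h4⟩⟩
      ⟨⟨x', hx', j', hj', h1'⟩, h2', h3', ⟨k', hk', c', h4'⟩⟩
    refine ⟨⟨x + x', add_mem hx hx', j + j', hJ.add_mem _ hj _ hj', ?_⟩, hJ.add_mem _ h2 _ h2',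
      hJ.add_mem _ h3 _ h3', ⟨k + k', hJ.add_mem _ hk _ hk', c + c', ?_⟩⟩
    · rw [Matrix.add_apply, h1, h1']; abel
    · rw [Matrix.add_apply, h4, h4', add_smul]; abel
  mul_mem' := by
    rintro m n ⟨⟨x, hx, j, hj, h1⟩, h2, h3, ⟨k, hk, c, h4⟩⟩
      ⟨⟨x', hx', j', hj', h1'⟩, h2', h3', ⟨k', hk', c', h4'⟩⟩
    refine ⟨⟨x * x', mul_mem hx hx', x * j' + j * (x' + j') + m 0 1 * n 1 0, ?_, ?_⟩, ?_,
      ?_, ⟨k * (k' + c' • 1) + c • k' + m 1 0 * n 0 1, ?_, c * c', ?_⟩⟩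
    · exact hJ.add_mem _ (hJ.add_mem _ (hJ.mul_mem_left _ _ hj') _ (hJ.mul_mem_right _ _ hj)) _
        (hJ.mul_mem_left _ _ h3')
    · rw [Matrix.mul_apply, Fin.sum_univ_two, h1, h1']; noncomm_ring
    · rw [Matrix.mul_apply, Fin.sum_univ_two]
      exact hJ.add_mem _ (hJ.mul_mem_left _ _ h2') _ (hJ.mul_mem_right _ _ h2)
    · rw [Matrix.mul_apply, Fin.sum_univ_two]
      exact hJ.add_mem _ (hJ.mul_mem_right _ _ h3) _ (hJ.mul_mem_left _ _ h3')
    · exact hJ.add_mem _ (hJ.add_mem _ (hJ.mul_mem_right _ _ hk) _ (hJ.smul_mem _ hk')) _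
        (hJ.mul_mem_left _ _ h2')
    · rw [Matrix.mul_apply, Fin.sum_univ_two, h4, h4']
      simp only [add_mul, mul_add, smul_mul_assoc, mul_smul_comm, one_mul, mul_one, smul_add,
        smul_smul, mul_comm c' c]
      abel
  algebraMap_mem' := by
    intro c
    refine ⟨⟨algebraMap ℂ A c, algebraMap_mem _ c, 0, hJ.zero_mem, ?_⟩, ?_, ?_,
      ⟨0, hJ.zero_mem, c, ?_⟩⟩
    · simp [Matrix.algebraMap_matrix_apply]
    · simpa [Matrix.algebraMap_matrix_apply] using hJ.zero_mem
    · simpa [Matrix.algebraMap_matrix_apply] using hJ.zero_mem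
    · simp [Matrix.algebraMap_matrix_apply, Algebra.algebraMap_eq_smul_one]
  star_mem' := by
    rintro m ⟨⟨x, hx, j, hj, h1⟩, h2, h3, ⟨k, hk, c, h4⟩⟩
    refine ⟨⟨star x, star_mem hx, star j, hJ.star_mem hj, ?_⟩, hJ.star_mem h3,
      hJ.star_mem h2, ⟨star k, hJ.star_mem hk, star c, ?_⟩⟩
    · rw [Matrix.star_apply, h1, star_add]
    · rw [Matrix.star_apply, h4, star_add, star_smul, star_one]

lemma isClosed_target {J : Set A} (X : Set A) (hJ : IsClosedTwoSidedIdeal A J) :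
    IsClosed (target X hJ : Set (Matrix (Fin 2) (Fin 2) A)) := by
  have h1 : IsClosed (cstarPlusSet A X J) :=
    hJ.isClosed_add (cstarGen A X) (StarSubalgebra.isClosed_topologicalClosure _)
  have hc : ∀ i j : Fin 2, Continuous fun m : Matrix (Fin 2) (Fin 2) A => m i j :=
    fun i j => continuous_id.matrix_elem i j
  exact (h1.preimage (hc 0 0)).inter ((hJ.isClosed.preimage (hc 0 1)).inter
    ((hJ.isClosed.preimage (hc 1 0)).inter (hJ.isClosed_unitize.preimage (hc 1 1))))

lemma target_le_calg {X J : Set A} (hX : IsOperatorSystem A X) (hJ : IsClosedTwoSidedIdeal A J) :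
    target X hJ ≤ calg A X J := by
  have hcl : IsClosed (calg A X J : Set (Matrix (Fin 2) (Fin 2) A)) :=
    StarSubalgebra.isClosed_topologicalClosure _
  have hsub : ∀ m ∈ opSys A X J, m ∈ calg A X J := fun m hm =>
    StarSubalgebra.le_topologicalClosure _ (StarAlgebra.subset_adjoin ℂ _ hm)
  have hX0 : (0 : A) ∈ X := by simpa using hX.smul_mem 0 1 hX.one_mem
  have hU0 : (0 : A) ∈ unitize A J := ⟨0, hJ.zero_mem, 0, by simp⟩
  let D : A → Matrix (Fin 2) (Fin 2) A := fun a => !![a, 0; 0, 0]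
  have hD : Continuous D := by
    apply continuous_matrix
    intro i j
    fin_cases i <;> fin_cases j <;> simp [D] <;> fun_prop
  have hDX : ∀ x ∈ X, D x ∈ calg A X J := fun x hx =>
    hsub _ ⟨by simpa [D] using hx, by simpa [D] using hJ.zero_mem, by simpa [D] using hJ.zero_mem,
      by simpa [D] using hU0⟩
  have hDcl : IsClosed {a : A | D a ∈ calg A X J} := hcl.preimage hD
  have hDC : ∀ x ∈ cstarGen A X, D x ∈ calg A X J := by
    intro x hx
    have hx' : x ∈ closure (StarAlgebra.adjoin ℂ X : Set A) := hx
    refine closure_minimal (t := {a : A | D a ∈ calg A X J}) ?_ hDcl hx'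
    intro y hy
    change D y ∈ calg A X J
    induction hy using StarAlgebra.adjoin_induction with
    | mem y hy => exact hDX y hy
    | algebraMap r =>
      apply hDX
      rw [Algebra.algebraMap_eq_smul_one]
      exact hX.smul_mem _ _ hX.one_mem
    | add a b _ _ ha hb =>
      have : D (a + b) = D a + D b := by simp [D]
      rw [this]; exact add_mem ha hb
    | mul a b _ _ ha hb =>
      have : D (a * b) = D a * D b := by simp [D]
      rw [this]; exact mul_mem ha hb
    | star a _ ha =>
      have : D (star a) = star (D a) := by
        ext i j
        fin_cases i <;> fin_cases j <;> simp [D, Matrix.star_apply]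
      rw [this]; exact star_mem ha
  have h12 : ∀ j ∈ J, !![0, j; 0, 0] ∈ calg A X J := fun j hj =>
    hsub _ ⟨by simpa using hX0, by simpa using hj, by simpa using hJ.zero_mem, by simpa using hU0⟩
  have h21 : ∀ j ∈ J, !![0, 0; j, 0] ∈ calg A X J := fun j hj =>
    hsub _ ⟨by simpa using hX0, by simpa using hJ.zero_mem, by simpa using hj, by simpa using hU0⟩
  have h22 : ∀ d ∈ unitize A J, !![0, 0; 0, d] ∈ calg A X J := fun j hj =>
    hsub _ ⟨by simpa using hX0, by simpa using hJ.zero_mem, by simpa using hJ.zero_mem,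
      by simpa using hj⟩
  have hDJ : ∀ j ∈ J, D j ∈ calg A X J := by
    intro j hj
    have : j ∈ closure {a : A | D a ∈ calg A X J} := by
      rw [Metric.mem_closure_iff]
      intro ε hε
      obtain ⟨e, he, hje⟩ := hJ.exists_approx hj (half_pos hε)
      refine ⟨j * e, ?_, by rw [dist_eq_norm]; linarith⟩
      have h : D (j * e) = !![0, j; 0, 0] * !![0, 0; e, 0] := by simp [D]
      change D (j * e) ∈ calg A X J
      rw [h]
      exact mul_mem (h12 j hj) (h21 e he)
    rwa [hDcl.closure_eq] at this
  rintro m ⟨⟨x, hx, j, hj, h1⟩, h2, h3, h4⟩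
  have : m = D x + D j + !![0, m 0 1; 0, 0] + !![0, 0; m 1 0, 0] + !![0, 0; 0, m 1 1] := by
    ext i j
    fin_cases i <;> fin_cases j <;> simp [D, h1]
  rw [this]
  exact add_mem (add_mem (add_mem (add_mem (hDC x hx) (hDJ j hj)) (h12 _ h2)) (h21 _ h3)) (h22 _ h4)

lemma calg_le_target {X J : Set A} (hJ : IsClosedTwoSidedIdeal A J) :
    calg A X J ≤ target X hJ := by
  refine StarSubalgebra.topologicalClosure_minimal ?_ (isClosed_target X hJ)
  rw [StarAlgebra.adjoin_le_iff]
  rintro m ⟨h1, h2, h3, h4⟩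
  exact ⟨⟨m 0 0, StarSubalgebra.le_topologicalClosure _ (StarAlgebra.subset_adjoin ℂ _ h1), 0,
    hJ.zero_mem, by simp⟩, h2, h3, h4⟩

variable (A)

/-- Lemma 2.1: the C*-algebra `B(X,J)` generated by `S(X,J)` inside `M₂(A)`
consists precisely of the matrices `[[a,b],[c,d]]` with `a ∈ C*(X) + J`, `b, c ∈ J` and
`d ∈ J + ℂ1`.  In particular, `B(X,J)` contains the closed two-sided ideal `M₂(J)`. -/
theorem stmt0 (X J : Set A) (hX : IsOperatorSystem A X) (hJ : IsClosedTwoSidedIdeal A J) :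
    ((calg A X J : Set (Matrix (Fin 2) (Fin 2) A)) =
      {m | m 0 0 ∈ cstarPlusSet A X J ∧ m 0 1 ∈ J ∧ m 1 0 ∈ J ∧ m 1 1 ∈ unitize A J}) ∧
    (∀ m : Matrix (Fin 2) (Fin 2) A, (∀ i j : Fin 2, m i j ∈ J) → m ∈ calg A X J) := by
  have h : calg A X J = target X hJ := le_antisymm (calg_le_target hJ) (target_le_calg hX hJ)
  refine ⟨by rw [h]; rfl, fun m hm => ?_⟩
  rw [h]
  exact ⟨⟨0, zero_mem _, m 0 0, hm 0 0, by simp⟩, hm 0 1, hm 1 0, ⟨m 1 1, hm 1 1, 0, by simp⟩⟩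

end ArvesonCounterexample
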